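/- Let (Ω, Σ, ℙ) be a probability space, K ⊆ ℝ^m a convex set, f : K → ℝ a strictly positive function, and X : Ω → K a random variable such that X and f∘X are integrable, and assume 𝔼[X] ∈ K. Let g_l, g_u : K → ℝ be real-valued functions such that CH(G(f))|_x ⊆ [g_l(x), g_u(x)] for all x ∈ K, and define ĉ_l = inf_{x ∈ K} g_l(x)/f(x) and ĉ_u = sup_{x ∈ K} g_u(x)/f(x), assumed finite. Then ĉ_l · f(𝔼[X]) ≤ 𝔼[f(X)] ≤ ĉ_u · f(𝔼[X]). -/

import Mathlib

open MeasureTheory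

/-- Weak separation of the origin from a convex set that need be neither open nor closed. -/
theorem Convex.exists_ne_zero_forall_apply_nonpos {E : Type*} [NormedAddCommGroup E]
    [NormedSpace ℝ E] [FiniteDimensional ℝ E] {C : Set E} (hC : Convex ℝ C) (hne : C.Nonempty)
    (h0 : (0 : E) ∉ C) : ∃ l : E →L[ℝ] ℝ, l ≠ 0 ∧ ∀ c ∈ C, l c ≤ 0 := by
  by_cases hint : (interior C).Nonempty
  · obtain ⟨l, hl⟩ := geometric_hahn_banach_open_point hC.interior isOpen_interior
      (fun h => h0 (interior_subset h))
    rw [map_zero] at hl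
    refine ⟨l, ?_, fun c hc => ?_⟩
    · rintro rfl
      obtain ⟨a, ha⟩ := hint
      simpa using hl a ha
    · have hcl : c ∈ closure (interior C) := by
        rw [hC.closure_interior_eq_closure_of_nonempty_interior hint]
        exact subset_closure hc
      exact closure_minimal (fun a ha => (hl a ha).le)
        (isClosed_le l.continuous continuous_const) hcl
  · rw [hC.interior_nonempty_iff_affineSpan_eq_top] at hint
    obtain ⟨p, hp⟩ := hne
    have hdir : (affineSpan ℝ C).direction < ⊤ := by
      rw [lt_top_iff_ne_top]
      intro h
      exact hint ((AffineSubspace.direction_eq_top_iff_of_nonempty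
        ⟨p, subset_affineSpan ℝ C hp⟩).1 h)
    obtain ⟨l, hl0, hl⟩ := Submodule.exists_le_ker_of_lt_top _ hdir
    have hconst : ∀ c ∈ C, l c = l p := fun c hc => by
      have h := hl (AffineSubspace.vsub_mem_direction (subset_affineSpan ℝ C hc)
        (subset_affineSpan ℝ C hp))
      rwa [LinearMap.mem_ker, vsub_eq_sub, map_sub, sub_eq_zero] at h
    have hL0 : LinearMap.toContinuousLinearMap l ≠ 0 := by simpa using hl0
    rcases le_total (l p) 0 with h | h
    · exact ⟨LinearMap.toContinuousLinearMap l, hL0, fun c hc => by simpa [hconst c hc] using h⟩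
    · exact ⟨-LinearMap.toContinuousLinearMap l, neg_ne_zero.2 hL0,
        fun c hc => by simpa [hconst c hc] using h⟩

/-- A centred integrable random vector taking values in a convex set of a finite-dimensional space
forces that set to contain the origin. -/
theorem Convex.zero_mem_of_integral_eq_zero {Ω : Type*} [MeasurableSpace Ω] (μ : Measure Ω)
    [IsProbabilityMeasure μ] (n : ℕ) {E : Type*} [NormedAddCommGroup E] [NormedSpace ℝ E]
    [FiniteDimensional ℝ E] (hn : Module.finrank ℝ E = n) {C : Set E} (hC : Convex ℝ C)
    {Z : Ω → E} (hZ : Integrable Z μ) (hZC : ∀ᵐ ω ∂μ, Z ω ∈ C) (hZ0 : ∫ ω, Z ω ∂μ = 0) :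
    (0 : E) ∈ C := by
  induction n using Nat.strong_induction_on generalizing E with
  | _ n ih =>
    by_contra h0
    obtain ⟨ω₀, hω₀⟩ := hZC.exists
    obtain ⟨l, hl0, hl⟩ := hC.exists_ne_zero_forall_apply_nonpos ⟨_, hω₀⟩ h0
    have hker : ∀ᵐ ω ∂μ, l (Z ω) = 0 := by
      have hint : ∫ ω, -l (Z ω) ∂μ = 0 := by
        rw [integral_neg, l.integral_comp_comm hZ, hZ0, map_zero, neg_zero]
      have hnonneg : 0 ≤ᵐ[μ] fun ω => -l (Z ω) := by
        filter_upwards [hZC] with ω hω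
        simpa using hl _ hω
      filter_upwards [(integral_eq_zero_iff_of_nonneg_ae hnonneg
        (l.integrable_comp hZ).neg).1 hint] with ω hω
      simpa using hω
    let V : Submodule ℝ E := (l : E →ₗ[ℝ] ℝ).ker
    obtain ⟨P₀, hP₀⟩ := V.subtype.exists_leftInverse_of_injective V.ker_subtype
    let P : E →L[ℝ] V := LinearMap.toContinuousLinearMap P₀
    have hP : ∀ v : V, P v = v := fun v => LinearMap.congr_fun hP₀ v
    have hV : V ≠ ⊤ := fun h => hl0 (by
      ext x
      exact LinearMap.mem_ker.1 (h ▸ Submodule.mem_top : x ∈ V))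
    have hmem := ih _ (hn ▸ Submodule.finrank_lt hV) rfl (hC.linear_preimage V.subtype)
      (Z := fun ω => P (Z ω)) (P.integrable_comp hZ)
      (by
        filter_upwards [hZC, hker] with ω hω hω0
        have h : P (Z ω) = ⟨Z ω, LinearMap.mem_ker.2 hω0⟩ := hP ⟨Z ω, LinearMap.mem_ker.2 hω0⟩
        simpa [h] using hω)
      (by rw [P.integral_comp_comm hZ, hZ0, map_zero])
    exact h0 (by simpa using hmem)

/-- The mean of an integrable random vector taking values in a convex set of a finite-dimensional
space belongs to that set, even if the set is not closed. -/
theorem Convex.integral_mem_of_finiteDimensional {Ω : Type*} [MeasurableSpace Ω] {μ : Measure Ω}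
    [IsProbabilityMeasure μ] {E : Type*} [NormedAddCommGroup E] [NormedSpace ℝ E]
    [FiniteDimensional ℝ E] {C : Set E} (hC : Convex ℝ C) {Z : Ω → E} (hZ : Integrable Z μ)
    (hZC : ∀ᵐ ω ∂μ, Z ω ∈ C) : ∫ ω, Z ω ∂μ ∈ C := by
  have h := (hC.translate_preimage_right (∫ ω, Z ω ∂μ)).zero_mem_of_integral_eq_zero μ _ rfl
    (Z := fun ω => Z ω - ∫ ω, Z ω ∂μ) (hZ.sub (integrable_const _))
    (by filter_upwards [hZC] with ω hω; simpa using hω)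
    (by rw [integral_sub hZ (integrable_const _)]; simp)
  simpa using h

/-- multiplicative bounds `ĉ_l · f(𝔼[X]) ≤ 𝔼[f(X)] ≤ ĉ_u · f(𝔼[X])` with
`ĉ_l = inf_{x ∈ K} g_l(x)/f(x)` and `ĉ_u = sup_{x ∈ K} g_u(x)/f(x)`. -/
theorem stmt_10 {Ω : Type*} [MeasurableSpace Ω] (ℙ : Measure Ω) [IsProbabilityMeasure ℙ]
    (m : ℕ) (K : Set (Fin m → ℝ)) (hK : Convex ℝ K) (f : (Fin m → ℝ) → ℝ)
    (hfpos : ∀ x ∈ K, 0 < f x)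
    (X : Ω → Fin m → ℝ) (hXK : ∀ ω, X ω ∈ K)
    (hXint : Integrable X ℙ) (hfXint : Integrable (fun ω => f (X ω)) ℙ)
    (hmean : (∫ ω, X ω ∂ℙ) ∈ K)
    (gl gu : (Fin m → ℝ) → ℝ)
    (henv : ∀ x ∈ K, ∀ y : ℝ,
      (x, y) ∈ convexHull ℝ ((fun x => (x, f x)) '' K) → gl x ≤ y ∧ y ≤ gu x)
    (hcl : BddBelow (Set.range fun x : K => gl x / f x))
    (hcu : BddAbove (Set.range fun x : K => gu x / f x)) :
    (⨅ x : K, gl x / f x) * f (∫ ω, X ω ∂ℙ) ≤ ∫ ω, f (X ω) ∂ℙ ∧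
    (∫ ω, f (X ω) ∂ℙ) ≤ (⨆ x : K, gu x / f x) * f (∫ ω, X ω ∂ℙ) := by
  have hhull : ((∫ ω, X ω ∂ℙ), ∫ ω, f (X ω) ∂ℙ) ∈ convexHull ℝ ((fun x => (x, f x)) '' K) := by
    rw [← integral_pair hXint hfXint]
    exact (convex_convexHull ℝ _).integral_mem_of_finiteDimensional (hXint.prodMk hfXint)
      (.of_forall fun ω => subset_convexHull ℝ _ ⟨X ω, hXK ω, rfl⟩)
  obtain ⟨hlow, hupp⟩ := henv _ hmean _ hhull
  have hpos := hfpos _ hmean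
  constructor
  · exact ((le_div_iff₀ hpos).1 (ciInf_le hcl ⟨_, hmean⟩)).trans hlow
  · exact hupp.trans ((div_le_iff₀ hpos).1 (le_ciSup hcu ⟨_, hmean⟩))
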